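/- There exist split graphs with N vertices that require Ω(√N) colours to be subset square coloured: for every integer n ≥ 2, let G_n be the split graph on vertex set A ∪ B where A = {a_1, …, a_n} induces a clique, B = {b_{i,j} : 1 ≤ i, j ≤ n} is an independent set, and each b_{i,j} is adjacent exactly to a_i and a_j (so b_{i,i} has degree 1). Then G_n has n² + n vertices and χ_ssc(G_n) ≥ n − 1. -/

import Mathlib

open SimpleGraph

/-- The closed neighbourhood of `v` in `G`. -/
def closedNbhd {V : Type*} (G : SimpleGraph V) (v : V) : Set V :=
  {u | u = v ∨ G.Adj v u}

/-- `c` is a `q`-subset square colouring of `G`: colours `1, …, q` are real colours and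
colour `0` means "uncoloured"; every closed neighbourhood contains a coloured vertex, and
no nonzero colour appears on two distinct vertices of a closed neighbourhood. -/
def IsSubsetSquareColouring {V : Type*} (G : SimpleGraph V) (q : ℕ) (c : V → ℕ) : Prop :=
  (∀ v, c v ≤ q) ∧
  (∀ v, ∃ u ∈ closedNbhd G v, c u ≠ 0) ∧
  (∀ v i, 1 ≤ i → i ≤ q →
    ∀ u ∈ closedNbhd G v, ∀ w ∈ closedNbhd G v, c u = i → c w = i → u = w)

/-- The subset square chromatic number `χ_ssc G`. -/
noncomputable def sscNum {V : Type*} (G : SimpleGraph V) : ℕ :=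
  sInf {q | ∃ c : V → ℕ, IsSubsetSquareColouring G q c}

/-- The split graph on `A = Fin n` (a clique) and `B = Fin n × Fin n` (an independent
set), where `b_{i,j}` is adjacent exactly to `a_i` and `a_j`. -/
def hardSplitGraph (n : ℕ) : SimpleGraph (Fin n ⊕ Fin n × Fin n) :=
  SimpleGraph.fromRel (fun x y =>
    (∃ i j : Fin n, i ≠ j ∧ x = Sum.inl i ∧ y = Sum.inl j) ∨
    (∃ i j : Fin n, x = Sum.inr (i, j) ∧ (y = Sum.inl i ∨ y = Sum.inl j)))

/-!
If every clique vertex `a_j` is coloured, the clique alone uses `n` colours. Otherwise fix an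
uncoloured `a_i`. For each `j`, the closed neighbourhood `{b_{i,j}, a_i, a_j}` of `b_{i,j}` contains
a coloured vertex, which is `a_j` or `b_{i,j}`. These `n` vertices, one for each `j`, are distinct
and all lie in the closed neighbourhood of `a_i`, so their colours are pairwise distinct.
-/

section ClosedNbhd

variable {V : Type*} {G : SimpleGraph V}

theorem self_mem_closedNbhd (v : V) : v ∈ closedNbhd G v :=
  Or.inl rfl

theorem subset_closedNbhd_of_isClique {s : Set V} (hs : G.IsClique s) {v : V} (hv : v ∈ s) :
    s ⊆ closedNbhd G v := fun _ hu =>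
  or_iff_not_imp_left.2 fun huv => hs hv hu (Ne.symm huv)

end ClosedNbhd

namespace IsSubsetSquareColouring

variable {V : Type*} {G : SimpleGraph V} {q : ℕ} {c : V → ℕ}

theorem injOn_coloured_closedNbhd (hc : IsSubsetSquareColouring G q c) (v : V) :
    Set.InjOn c {u ∈ closedNbhd G v | c u ≠ 0} := fun u hu w hw huw =>
  hc.2.2 v (c u) (Nat.one_le_iff_ne_zero.2 hu.2) (hc.1 u) u hu.1 w hw.1 rfl huw.symm

theorem card_le_of_subset_closedNbhd (hc : IsSubsetSquareColouring G q c) {s : Finset V} {v : V}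
    (hs : ↑s ⊆ closedNbhd G v) (hcol : ∀ u ∈ s, c u ≠ 0) : s.card ≤ q := by
  have hmaps : Set.MapsTo c s (Finset.Icc 1 q) := fun u hu =>
    Finset.mem_Icc.2 ⟨Nat.one_le_iff_ne_zero.2 (hcol u hu), hc.1 u⟩
  have hsub : ↑s ⊆ {u ∈ closedNbhd G v | c u ≠ 0} := fun u hu => ⟨hs hu, hcol u hu⟩
  have hinj : Set.InjOn c s := (hc.injOn_coloured_closedNbhd v).mono hsub
  simpa only [Nat.card_Icc, Nat.add_sub_cancel] using Finset.card_le_card_of_injOn c hmaps hinj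

theorem card_le_of_isClique (hc : IsSubsetSquareColouring G q c) {s : Finset V}
    (hs : G.IsClique s) (hcol : ∀ u ∈ s, c u ≠ 0) : s.card ≤ q := by
  rcases s.eq_empty_or_nonempty with rfl | ⟨v, hv⟩
  · exact Nat.zero_le q
  · exact hc.card_le_of_subset_closedNbhd (subset_closedNbhd_of_isClique hs hv) hcol

end IsSubsetSquareColouring

theorem exists_isSubsetSquareColouring {V : Type*} [Finite V] (G : SimpleGraph V) :
    ∃ (q : ℕ) (c : V → ℕ), IsSubsetSquareColouring G q c := by
  obtain ⟨m, ⟨e⟩⟩ := Finite.exists_equiv_fin V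
  have hinj : Function.Injective fun v => (e v : ℕ) + 1 :=
    (add_left_injective 1).comp (Fin.val_injective.comp e.injective)
  exact ⟨m, fun v => (e v : ℕ) + 1, fun v => (e v).isLt,
    fun v => ⟨v, self_mem_closedNbhd v, Nat.succ_ne_zero _⟩,
    fun _ _ _ _ _ _ _ _ hu hw => hinj (hu.trans hw.symm)⟩

theorem le_sscNum {V : Type*} [Finite V] {G : SimpleGraph V} {m : ℕ}
    (h : ∀ q c, IsSubsetSquareColouring G q c → m ≤ q) : m ≤ sscNum G := by
  refine le_csInf (exists_isSubsetSquareColouring G) ?_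
  rintro q ⟨c, hc⟩
  exact h q c hc

namespace hardSplitGraph

variable {n : ℕ}

theorem isClique_range_inl : (hardSplitGraph n).IsClique (Set.range Sum.inl) := by
  rintro _ ⟨i, rfl⟩ _ ⟨j, rfl⟩ hij
  exact (SimpleGraph.fromRel_adj _ _ _).2
    ⟨hij, Or.inl (Or.inl ⟨i, j, fun h => hij (congrArg Sum.inl h), rfl, rfl⟩)⟩

theorem adj_inl_inr {i j k : Fin n} :
    (hardSplitGraph n).Adj (Sum.inl k) (Sum.inr (i, j)) ↔ k = i ∨ k = j := by
  simp [hardSplitGraph]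

theorem not_adj_inr_inr (x y : Fin n × Fin n) :
    ¬ (hardSplitGraph n).Adj (Sum.inr x) (Sum.inr y) := by
  simp [hardSplitGraph]

theorem closedNbhd_inr (i j : Fin n) :
    closedNbhd (hardSplitGraph n) (Sum.inr (i, j)) =
      {Sum.inr (i, j), Sum.inl i, Sum.inl j} := by
  ext (k | x)
  · simp [closedNbhd, SimpleGraph.adj_comm, adj_inl_inr]
  · simp [closedNbhd, not_adj_inr_inr]

variable {q : ℕ} {c : Fin n ⊕ Fin n × Fin n → ℕ}

theorem exists_coloured_mem_closedNbhd_inl (hc : IsSubsetSquareColouring (hardSplitGraph n) q c)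
    {i : Fin n} (hi : c (Sum.inl i) = 0) (j : Fin n) :
    ∃ u ∈ closedNbhd (hardSplitGraph n) (Sum.inl i), c u ≠ 0 ∧ Sum.elim id Prod.snd u = j := by
  obtain ⟨u, hu, hcu⟩ := hc.2.1 (Sum.inr (i, j))
  rw [closedNbhd_inr] at hu
  rcases hu with rfl | rfl | rfl
  · exact ⟨_, Or.inr (adj_inl_inr.2 (Or.inl rfl)), hcu, rfl⟩
  · exact absurd hi hcu
  · exact ⟨_, subset_closedNbhd_of_isClique isClique_range_inl ⟨i, rfl⟩ ⟨j, rfl⟩, hcu, rfl⟩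

theorem le_of_uncoloured_inl (hc : IsSubsetSquareColouring (hardSplitGraph n) q c) {i : Fin n}
    (hi : c (Sum.inl i) = 0) : n ≤ q := by
  choose f hf_mem hf_coloured hf_proj using exists_coloured_mem_closedNbhd_inl hc hi
  -- The map `Sum.elim id Prod.snd` recovers `j` from both `a_j` and `b_{i,j}`.
  have hf_inj : Function.Injective f := Function.LeftInverse.injective hf_proj
  have hcard := hc.card_le_of_subset_closedNbhd (s := Finset.univ.map ⟨f, hf_inj⟩)
    (v := Sum.inl i) (by simpa [Set.range_subset_iff] using hf_mem) (by simpa using hf_coloured)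
  simpa using hcard

theorem le_of_forall_coloured_inl (hc : IsSubsetSquareColouring (hardSplitGraph n) q c)
    (h : ∀ i, c (Sum.inl i) ≠ 0) : n ≤ q := by
  have hcard := hc.card_le_of_isClique (s := Finset.univ.map Function.Embedding.inl)
    (by simpa using isClique_range_inl) (by simpa using h)
  simpa using hcard

end hardSplitGraph

theorem le_sscNum_hardSplitGraph (n : ℕ) : n ≤ sscNum (hardSplitGraph n) := by
  refine le_sscNum fun q c hc => ?_
  by_cases h : ∃ i, c (Sum.inl i) = 0
  · obtain ⟨i, hi⟩ := h
    exact hardSplitGraph.le_of_uncoloured_inl hc hi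
  · exact hardSplitGraph.le_of_forall_coloured_inl hc (not_exists.1 h)

theorem stmt13 (n : ℕ) (hn : 2 ≤ n) :
    Fintype.card (Fin n ⊕ Fin n × Fin n) = n ^ 2 + n ∧
    n - 1 ≤ sscNum (hardSplitGraph n) := by
  have hcard : Fintype.card (Fin n ⊕ Fin n × Fin n) = n ^ 2 + n := by
    rw [Fintype.card_sum, Fintype.card_prod, Fintype.card_fin, sq, add_comm]
  exact ⟨hcard, (Nat.sub_le n 1).trans (le_sscNum_hardSplitGraph n)⟩
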